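/- arXiv:0801.0080 — 2 statements merged into one kernel-verified Lean document; each statement's English description precedes it below -/
import Mathlib

section
/- Let A₁,…,Aₙ be finite subsets of a field F with |Aᵢ| ≥ i for all i = 1,…,n. Then |{ x₁ + ⋯ + xₙ : xᵢ ∈ Aᵢ, xᵢ ≠ x_j for i ≠ j }| ≥ min{ p(F), 1 + Σ_{i=1}^n min_{i ≤ j ≤ n} (|A_j| − j) }. -/
open MvPolynomial in
lemma aux_coeff_sum_pow {F : Type*} [Field F] {n : ℕ} (d : Fin n →₀ ℕ) (m : ℕ)
    (h : ∑ i, d i = m) :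
    coeff d ((∑ i, X i : MvPolynomial (Fin n) F) ^ m) * ∏ i, ((d i).factorial : F)
      = (m.factorial : F) := by
  classical
  rw [Finset.sum_pow_eq_sum_piAntidiag, coeff_sum]
  have key : ∀ k : Fin n → ℕ, coeff d ((Nat.multinomial Finset.univ k : MvPolynomial (Fin n) F)
      * ∏ i, X i ^ k i) = if k = d then (Nat.multinomial Finset.univ k : F) else 0 := by
    intro k
    have h1 : (∏ i, X i ^ k i : MvPolynomial (Fin n) F)
        = monomial (Finsupp.equivFunOnFinite.symm k) 1 := by
      rw [monomial_eq, Finsupp.prod_fintype]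
      · simp
      · simp
    have h2 : (Nat.multinomial Finset.univ k : MvPolynomial (Fin n) F)
        = C (Nat.multinomial Finset.univ k : F) := by simp
    rw [h1, h2, coeff_C_mul, coeff_monomial]
    have : (Finsupp.equivFunOnFinite.symm k = d) ↔ k = d := by
      rw [Equiv.symm_apply_eq]; rfl
    simp [this]
  simp_rw [key]
  rw [Finset.sum_ite_eq' , if_pos (by simp [h])]
  rw [← h, ← Nat.multinomial_spec Finset.univ d]
  push_cast
  ring

open MvPolynomial in
lemma aux_term {F : Type*} [Field F] {n : ℕ} (c : Fin n →₀ ℕ) (M : ℕ) (s : Equiv.Perm (Fin n))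
    (h : ∑ i, c i = M + ∑ i : Fin n, i.1) :
    coeff c ((∑ i, X i : MvPolynomial (Fin n) F) ^ M * ∏ i, X i ^ (s i).1)
      * ∏ i, ((c i).factorial : F)
      = (M.factorial : F) * ∏ i, ((c i).descFactorial (s i).1 : F) := by
  classical
  have h1 : (∏ i, X i ^ (s i).1 : MvPolynomial (Fin n) F)
      = monomial (Finsupp.equivFunOnFinite.symm (fun i => (s i).1)) 1 := by
    rw [monomial_eq, Finsupp.prod_fintype]
    · simp
    · simp
  rw [h1, coeff_mul_monomial']
  split_ifs with hle
  · have hle' : ∀ i, (s i).1 ≤ c i := fun i => hle i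
    have hs : ∑ i, (s i).1 = ∑ i : Fin n, i.1 := Equiv.sum_comp s (fun i => i.1)
    have hd : ∑ i, (c - Finsupp.equivFunOnFinite.symm (fun i => (s i).1)) i = M := by
      have : ∑ i, (c - Finsupp.equivFunOnFinite.symm (fun i => (s i).1)) i + ∑ i, (s i).1
          = ∑ i, c i := by
        rw [← Finset.sum_add_distrib]
        refine Finset.sum_congr rfl fun i _ => ?_
        have := hle' i
        simp; omega
      omega
    rw [← aux_coeff_sum_pow (F := F) _ M hd, mul_one, mul_assoc, ← Finset.prod_mul_distrib]
    congr 1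
    refine Finset.prod_congr rfl fun i _ => ?_
    rw [← Nat.factorial_mul_descFactorial (hle' i)]
    simp
  · have : ∃ i, c i < (s i).1 := by
      by_contra hh
      push Not at hh
      exact hle fun i => hh i
    obtain ⟨i, hi⟩ := this
    rw [zero_mul, Finset.prod_eq_zero (Finset.mem_univ i), mul_zero]
    simp [Nat.descFactorial_eq_zero_iff_lt.2 hi]

open MvPolynomial in
lemma aux_det {F : Type*} [Field F] {n : ℕ} :
    (Matrix.vandermonde (X : Fin n → MvPolynomial (Fin n) F)).det
      = ∑ s : Equiv.Perm (Fin n), C (((Equiv.Perm.sign s : ℤ) : F)) * ∏ i, X i ^ (s i).1 := by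
  rw [← Matrix.det_transpose, Matrix.det_apply']
  simp [Matrix.vandermonde_apply]

open MvPolynomial in
lemma aux_coeff {F : Type*} [Field F] {n : ℕ} (c : Fin n →₀ ℕ) (M : ℕ)
    (h : ∑ i, c i = M + ∑ i : Fin n, i.1) :
    coeff c ((∑ i, X i : MvPolynomial (Fin n) F) ^ M *
      (Matrix.vandermonde (X : Fin n → MvPolynomial (Fin n) F)).det)
      * ∏ i, ((c i).factorial : F)
      = (M.factorial : F) * (Matrix.vandermonde (fun i => (c i : F))).det := by
  rw [Matrix.det_eval_matrixOfPolynomials_eq_det_vandermonde _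
    (fun i : Fin n => descPochhammer F i.1) (fun i => descPochhammer_natDegree F i.1)
    (fun i => monic_descPochhammer F i.1), aux_det, ← Matrix.det_transpose, Matrix.det_apply',
    Finset.mul_sum, coeff_sum, Finset.sum_mul, Finset.mul_sum]
  refine Finset.sum_congr rfl fun s _ => ?_
  rw [mul_left_comm, coeff_C_mul, mul_assoc, aux_term c M s h]
  simp only [Matrix.transpose_apply, Matrix.of_apply, descPochhammer_eval_eq_descFactorial]
  ring

open MvPolynomial in
lemma aux_hom {F : Type*} [Field F] {n : ℕ} (k : ℕ) :
    ((∑ i, X i : MvPolynomial (Fin n) F) ^ k *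
      (Matrix.vandermonde (X : Fin n → MvPolynomial (Fin n) F)).det).IsHomogeneous
      (k + ∑ i : Fin n, i.1) := by
  refine IsHomogeneous.mul ?_ ?_
  · have := (IsHomogeneous.sum Finset.univ (fun i : Fin n => (X i : MvPolynomial (Fin n) F)) 1
      (fun i _ => isHomogeneous_X F i)).pow k
    simpa using this
  · rw [aux_det]
    refine IsHomogeneous.sum _ _ _ fun s _ => ?_
    refine IsHomogeneous.C_mul ?_ _
    rw [← Equiv.sum_comp s (fun i => i.1)]
    exact IsHomogeneous.prod _ _ _ fun i _ => isHomogeneous_X_pow i _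

/-- Core case -/
lemma aux_core {F : Type*} [Field F] {n : ℕ} (A : Fin n → Finset F) (c : Fin n → ℕ) (M : ℕ)
    (h : ∑ i, c i = M + ∑ i : Fin n, i.1) (hM : (M.factorial : F) ≠ 0)
    (hinj : StrictMono c) (hc : ∀ i, c i ≤ M) (hA : ∀ i, c i < (A i).card) (E : Finset F)
    (hE : ∀ x : Fin n → F, (∀ i, x i ∈ A i) → Function.Injective x → ∑ i, x i ∈ E) :
    M + 1 ≤ E.card := by
  classical
  by_contra hlt
  push Not at hlt
  have hlt : E.card ≤ M := by omega
  let t : Fin n →₀ ℕ := Finsupp.equivFunOnFinite.symm c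
  have ht : ∀ i, t i = c i := fun i => rfl
  have hdvd : ∀ k, 0 < k → k ≤ M → (k : F) ≠ 0 := by
    intro k h0 hk h1
    obtain ⟨q, hq⟩ := Nat.dvd_factorial h0 hk
    apply hM
    rw [hq]; simp [h1]
  let S : MvPolynomial (Fin n) F := ∑ i, MvPolynomial.X i
  let V := (Matrix.vandermonde (MvPolynomial.X : Fin n → MvPolynomial (Fin n) F)).det
  have hcoef : MvPolynomial.coeff t (S ^ M * V) ≠ 0 := by
    intro h0
    have := aux_coeff (F := F) t M (by simpa [ht] using h)
    change MvPolynomial.coeff t (S ^ M * V) * _ = _ at this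
    rw [h0, zero_mul] at this
    rcases mul_eq_zero.1 this.symm with h1 | h1
    · exact hM h1
    · rw [Matrix.det_vandermonde_eq_zero_iff] at h1
      obtain ⟨i, j, hij, hne⟩ := h1
      simp only [ht] at hij
      wlog hl : i < j generalizing i j
      · exact this j i hne.symm hij.symm (lt_of_le_of_ne (not_lt.1 hl) hne.symm)
      have hl' := hinj hl
      have := hc j
      apply hdvd (c j - c i) (by omega) (by omega)
      rw [Nat.cast_sub hl'.le, hij, sub_self]
  let g : Polynomial F := (∏ e ∈ E, (Polynomial.X - Polynomial.C e)) * Polynomial.X ^ (M - E.card)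
  have hmon0 : (∏ e ∈ E, (Polynomial.X - Polynomial.C e)).Monic :=
    Polynomial.monic_prod_of_monic _ _ fun e _ => Polynomial.monic_X_sub_C e
  have hmon : g.Monic := hmon0.mul (Polynomial.monic_X_pow _)
  have hdeg : g.natDegree = M := by
    rw [Polynomial.Monic.natDegree_mul hmon0 (Polynomial.monic_X_pow _)]
    simp; omega
  let f : MvPolynomial (Fin n) F := Polynomial.aeval S g * V
  have hf : f = ∑ k ∈ Finset.range (M + 1), MvPolynomial.C (g.coeff k) * (S ^ k * V) := by
    simp only [f]
    rw [Polynomial.aeval_eq_sum_range, hdeg, Finset.sum_mul]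
    refine Finset.sum_congr rfl fun k _ => ?_
    rw [MvPolynomial.smul_eq_C_mul, mul_assoc]
  have htd : t.degree = M + ∑ i : Fin n, i.1 := by
    rw [Finsupp.degree_eq_sum, ← h]; rfl
  have hfc : MvPolynomial.coeff t f = MvPolynomial.coeff t (S ^ M * V) := by
    rw [hf, MvPolynomial.coeff_sum, Finset.sum_eq_single M]
    · rw [MvPolynomial.coeff_C_mul]
      have : g.coeff M = 1 := by rw [← hdeg]; exact hmon
      rw [this, one_mul]
    · intro k _ hk
      rw [MvPolynomial.coeff_C_mul, (aux_hom k).coeff_eq_zero (by omega), mul_zero]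
    · simp
  have hfdeg : f.totalDegree = t.degree := by
    apply le_antisymm
    · rw [hf]
      apply MvPolynomial.totalDegree_finsetSum_le
      intro k hk
      have := ((aux_hom (F := F) (n := n) k).C_mul (g.coeff k)).totalDegree_le
      have hk := Finset.mem_range.1 hk
      refine this.trans (by omega)
    · have := MvPolynomial.le_totalDegree (p := f) (s := t)
        (by rw [MvPolynomial.mem_support_iff, hfc]; exact hcoef)
      exact this
  obtain ⟨x, hx, hne⟩ := MvPolynomial.combinatorial_nullstellensatz_exists_eval_nonzero f t
    (by rw [hfc]; exact hcoef) hfdeg A (fun i => hA i)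
  apply hne
  have hVe : MvPolynomial.eval x V = (Matrix.vandermonde x).det := by
    simp only [V]
    rw [RingHom.map_det]
    congr 1
    ext i j
    simp [Matrix.vandermonde_apply]
  simp only [f]
  rw [map_mul, hVe]
  by_cases hxi : Function.Injective x
  · have hmem := hE x hx hxi
    have : MvPolynomial.eval x (Polynomial.aeval S g) = g.eval (∑ i, x i) := by
      have h1 : MvPolynomial.eval x S = ∑ i, x i := by simp [S]
      rw [← h1, Polynomial.aeval_def, Polynomial.hom_eval₂]
      rw [Polynomial.eval]
      congr 1
      ext a; simp
    rw [this]
    simp only [g]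
    rw [Polynomial.eval_mul, Polynomial.eval_prod, Finset.prod_eq_zero hmem
      (by rw [Polynomial.eval_sub, Polynomial.eval_X, Polynomial.eval_C, sub_self])]
    simp
  · have : (Matrix.vandermonde x).det = 0 := by
      by_contra h0
      exact hxi (Matrix.det_vandermonde_ne_zero_iff.1 h0)
    rw [this, mul_zero]

lemma aux_main {F : Type*} [Field F] (n : ℕ) : ∀ (A : Fin n → Finset F) (m : Fin n → ℕ) (M : ℕ),
    Monotone m → ∑ i, m i = M → (M.factorial : F) ≠ 0 → (∀ i, i.1 + m i < (A i).card) →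
    ∀ E : Finset F,
    (∀ x : Fin n → F, (∀ i, x i ∈ A i) → Function.Injective x → ∑ i, x i ∈ E) →
    M + 1 ≤ E.card := by
  classical
  induction n with
  | zero =>
    intro A m M _ hs _ _ E hE
    have := hE (fun i => i.elim0) (fun i => i.elim0) (fun i => i.elim0)
    have := Finset.card_pos.2 ⟨_, this⟩
    simp at hs
    omega
  | succ n ih =>
    intro A m M hm hs hM hA E hE
    by_cases h0 : m 0 = 0
    · have h1 := hA 0
      obtain ⟨a, ha⟩ := Finset.card_pos.1 (Nat.zero_lt_of_lt h1)
      have := ih (fun i => (A i.succ).erase a) (fun i => m i.succ) M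
        (fun i j hij => hm (Fin.succ_le_succ_iff.2 hij))
        (by rw [Fin.sum_univ_succ, h0] at hs; omega) hM
        (fun i => by
          have := hA i.succ
          have h3 := Finset.pred_card_le_card_erase (s := A i.succ) (a := a)
          simp only [Fin.val_succ] at this
          omega)
        (E.image (fun e => e - a))
        (by
          intro x hx hxi
          rw [Finset.mem_image]
          refine ⟨∑ i, (Fin.cons a x : Fin (n+1) → F) i, hE _ ?_ ?_, ?_⟩
          · intro i
            refine Fin.cases ?_ (fun i => ?_) i
            · simpa using ha
            · simpa using Finset.mem_of_mem_erase (hx i)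
          · rw [Fin.cons_injective_iff]
            refine ⟨?_, hxi⟩
            rintro ⟨i, hi⟩
            exact Finset.ne_of_mem_erase (hx i) hi
          · simp [Fin.sum_univ_succ])
      exact this.trans Finset.card_image_le
    · have hpos : ∀ i, 1 ≤ m i := fun i => by
        have := hm (Fin.zero_le i); omega
      refine aux_core A (fun i => i.1 + m i) M ?_ hM ?_ ?_ hA E hE
      · rw [Finset.sum_add_distrib, hs, add_comm]
      · intro i j hij
        have := hm hij.le
        have h2 : i.1 < j.1 := hij
        simp only
        omega
      · intro i
        have h2 : ∑ j ∈ Finset.univ.erase i, m j + m i = M := by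
          rw [← hs, Finset.sum_erase_add _ _ (Finset.mem_univ i)]
        have h3 : ∑ j ∈ Finset.univ.erase i, 1 ≤ ∑ j ∈ Finset.univ.erase i, m j :=
          Finset.sum_le_sum fun j _ => hpos j
        simp at h3
        have := i.2
        omega

lemma aux_shrink {n : ℕ} (K : ℕ) : ∀ (d : ℕ) (m : Fin n → ℕ), Monotone m → ∑ i, m i = K + d →
    ∃ m' : Fin n → ℕ, Monotone m' ∧ (∀ i, m' i ≤ m i) ∧ ∑ i, m' i = K := by
  intro d
  induction d with
  | zero => exact fun m hm h => ⟨m, hm, fun _ => le_rfl, h⟩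
  | succ d ih =>
    intro m hm h
    have hex : ∃ i, 0 < m i := by
      by_contra hh
      push Not at hh
      have : ∑ i, m i = 0 := Finset.sum_eq_zero fun i _ => by have := hh i; omega
      omega
    obtain ⟨i, hi, hmin⟩ := WellFounded.has_min (wellFounded_lt (α := Fin n)) {i | 0 < m i} hex
    have hi : 0 < m i := hi
    have hz : ∀ j, j < i → m j = 0 := fun j hj => by
      by_contra h0
      exact hmin j (Nat.pos_of_ne_zero h0) hj
    obtain ⟨m', h1, h2, h3⟩ := ih (Function.update m i (m i - 1)) (by
      intro a b hab
      by_cases ha : a = i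
      · subst ha
        by_cases hb : b = a
        · subst hb; simp
        · have := hm hab
          simp [Function.update_of_ne hb]; omega
      · rw [Function.update_of_ne ha]
        by_cases hb : b = i
        · subst hb
          rw [hz a (lt_of_le_of_ne hab ha)]; simp
        · rw [Function.update_of_ne hb]; exact hm hab)
      (by
        rw [Finset.sum_update_of_mem (Finset.mem_univ i)]
        have h5 : ∑ j ∈ Finset.univ \ {i}, m j + m i = K + (d+1) := by
          rw [← h, ← Finset.sum_sdiff (Finset.subset_univ {i})]; simp
        omega)
    refine ⟨m', h1, fun j => (h2 j).trans ?_, h3⟩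
    by_cases hj : j = i
    · subst hj; simp
    · simp [Function.update_of_ne hj]

theorem stmt_8 {F : Type*} [Field F] (n : ℕ)
    (A : Fin n → Finset F) (hA : ∀ i : Fin n, i.1 + 1 ≤ (A i).card) :
    min (if ringChar F = 0 then (⊤ : ℕ∞) else (ringChar F : ℕ∞))
        ((1 + ∑ i : Fin n,
            sInf {c : ℕ | ∃ j : Fin n, i ≤ j ∧ c = (A j).card - (j.1 + 1)} : ℕ)) ≤
      ({y : F | ∃ x : Fin n → F, (∀ i, x i ∈ A i) ∧ Function.Injective x ∧
          (∑ i, x i) = y}.ncard : ℕ∞) := by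
  classical
  set m : Fin n → ℕ := fun i =>
    sInf {c : ℕ | ∃ j : Fin n, i ≤ j ∧ c = (A j).card - (j.1 + 1)} with hmdef
  set Y : Set F := {y : F | ∃ x : Fin n → F, (∀ i, x i ∈ A i) ∧ Function.Injective x ∧
          (∑ i, x i) = y} with hY
  have hmono : Monotone m := by
    intro i j hij
    obtain ⟨k, hk, hk'⟩ := Nat.sInf_mem
      (s := {c : ℕ | ∃ k : Fin n, j ≤ k ∧ c = (A k).card - (k.1 + 1)}) ⟨_, j, le_rfl, rfl⟩
    exact Nat.sInf_le ⟨k, hij.trans hk, hk'⟩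
  have hle : ∀ i, i.1 + m i < (A i).card := by
    intro i
    have h1 : m i ≤ (A i).card - (i.1 + 1) := Nat.sInf_le ⟨i, le_rfl, rfl⟩
    have := hA i
    omega
  have hfin : Y.Finite := by
    refine ((Fintype.piFinset A).image (fun x => ∑ i, x i)).finite_toSet.subset ?_
    rintro y ⟨x, hx, -, rfl⟩
    simp only [Finset.coe_image, Set.mem_image, Finset.mem_coe, Fintype.mem_piFinset]
    exact ⟨x, hx, rfl⟩
  have key : ∀ K, K ≤ ∑ i, m i → (K.factorial : F) ≠ 0 → K + 1 ≤ Y.ncard := by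
    intro K hK hKf
    obtain ⟨m', h1, h2, h3⟩ := aux_shrink K (∑ i, m i - K) m hmono (by omega)
    rw [Set.ncard_eq_toFinset_card Y hfin]
    refine aux_main n A m' K h1 h3 hKf (fun i => ?_) _ ?_
    · have := hle i; have := h2 i; omega
    · intro x hx hxi
      rw [Set.Finite.mem_toFinset]
      exact ⟨x, hx, hxi, rfl⟩
  change min _ ((1 + ∑ i, m i : ℕ) : ℕ∞) ≤ _
  split_ifs with h0
  · have : CharP F 0 := h0 ▸ ringChar.charP F
    have : CharZero F := CharP.charP_to_charZero F
    refine (min_le_right _ _).trans ?_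
    have := key (∑ i, m i) le_rfl (by exact_mod_cast Nat.factorial_ne_zero _)
    exact_mod_cast (by omega : 1 + ∑ i, m i ≤ Y.ncard)
  · have hp : (ringChar F).Prime := (CharP.char_is_prime_or_zero F (ringChar F)).resolve_right h0
    have hf : ∀ K, K < ringChar F → (K.factorial : F) ≠ 0 := by
      intro K hK h
      rw [ringChar.spec, hp.dvd_factorial] at h
      omega
    by_cases hlt : ∑ i, m i < ringChar F
    · refine (min_le_right _ _).trans ?_
      have := key (∑ i, m i) le_rfl (hf _ hlt)
      exact_mod_cast (by omega : 1 + ∑ i, m i ≤ Y.ncard)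
    · refine (min_le_left _ _).trans ?_
      have hpp := hp.pos
      have := key (ringChar F - 1) (by omega) (hf _ (by omega))
      exact_mod_cast (by omega : ringChar F ≤ Y.ncard)
end

section
/- Let A₁,…,Aₙ be finite subsets of a field F with |Aᵢ| ≥ i for i = 1,…,n, and let f(x₁,…,xₙ) = a₁x₁^k + ⋯ + aₙxₙ^k + g(x₁,…,xₙ) with a₁,…,aₙ ∈ F \ {0}, deg g < k, and k ≥ n. Then |{ f(x₁,…,xₙ) : xᵢ ∈ Aᵢ, xᵢ ≠ x_j for i ≠ j }| ≥ min{ p(F), 1 + Σ_{i=1}^n ⌊(|Aᵢ| − i)/k⌋ }. -/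
open MvPolynomial

lemma aux_split {ι : Type*} (s : Finset ι) (q : ι → ℕ) :
    ∀ N, N ≤ ∑ i ∈ s, q i → ∃ r : ι → ℕ, (∀ i, r i ≤ q i) ∧ ∑ i ∈ s, r i = N := by
  classical
  intro N
  induction N with
  | zero => intro _; exact ⟨fun _ => 0, by simp, by simp⟩
  | succ N ih =>
    intro h
    obtain ⟨r, hr, hs⟩ := ih (by omega)
    obtain ⟨i, hi, hlt⟩ : ∃ i ∈ s, r i < q i := by
      by_contra! hc
      have := Finset.sum_le_sum hc
      omega
    refine ⟨fun j => r j + if j = i then 1 else 0, fun j => ?_, ?_⟩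
    · by_cases hj : j = i
      · subst hj; simp; omega
      · simpa [hj] using hr j
    · simp [Finset.sum_add_distrib, hs, hi]

lemma aux_fact {F : Type*} [Field F] (N : ℕ) (h : ringChar F = 0 ∨ N < ringChar F) :
    ((N.factorial : ℕ) : F) ≠ 0 := by
  rw [Ne, ringChar.spec]
  rcases CharP.char_is_prime_or_zero F (ringChar F) with hp | h0
  · rw [hp.dvd_factorial]
    have := hp.pos
    omega
  · rw [h0, zero_dvd_iff]; exact Nat.factorial_ne_zero N

lemma aux_prod {F : Type*} [Field F] {n : ℕ} (k : ℕ) (L g : MvPolynomial (Fin n) F)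
    (hL : L.totalDegree ≤ k) (hg : g.totalDegree < k) (S : Finset F) :
    ∃ R : MvPolynomial (Fin n) F, ∏ c ∈ S, (L + g - C c) = L ^ S.card + R ∧
      (R = 0 ∨ R.totalDegree < k * S.card) := by
  classical
  induction S using Finset.induction_on with
  | empty => exact ⟨0, by simp, Or.inl rfl⟩
  | insert c S hc ih =>
    obtain ⟨R, hR, hd⟩ := ih
    rw [Finset.prod_insert hc, hR, Finset.card_insert_of_notMem hc]
    have h1 : (g - C c).totalDegree < k := (totalDegree_sub_C_le _ _).trans_lt hg
    have h2 : (L + g - C c).totalDegree ≤ k := by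
      rw [add_sub_assoc]
      exact (totalDegree_add _ _).trans (max_le hL h1.le)
    refine ⟨(L + g - C c) * R + (g - C c) * L ^ S.card, by ring, Or.inr ?_⟩
    have h3 : (L ^ S.card).totalDegree ≤ k * S.card :=
      (totalDegree_pow _ _).trans (by rw [mul_comm]; exact Nat.mul_le_mul_right _ hL)
    have h4 := totalDegree_mul (g - C c) (L ^ S.card)
    have h5 := totalDegree_mul (L + g - C c) R
    refine (totalDegree_add _ _).trans_lt (max_lt ?_ ?_)
    · rcases hd with h0 | hd
      · rw [h0, mul_zero, totalDegree_zero]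
        exact Nat.mul_pos (by omega) (by omega)
      · rw [mul_add, mul_one]; omega
    · rw [mul_add, mul_one]; omega

lemma aux_coeff_lin {F : Type*} [Field F] {n : ℕ} (a : Fin n → F) (r : Fin n →₀ ℕ) :
    coeff r ((∑ i : Fin n, C (a i) * (X i : MvPolynomial (Fin n) F)) ^ (∑ i, r i)) =
      (Nat.multinomial Finset.univ r : F) * ∏ i, a i ^ r i := by
  classical
  simp only [Finset.sum_pow_eq_sum_piAntidiag, coeff_sum,
    ← C_eq_coe_nat, coeff_C_mul, mul_pow, Finset.prod_mul_distrib, ← map_pow,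
    ← map_prod, coeff_prod_X_pow, mul_ite, mul_one, mul_zero]
  rw [Finset.sum_eq_single (r : Fin n → ℕ)]
  · rw [if_pos]
    ext i; simp
  · intro b _ hb
    rw [if_neg]
    intro h
    apply hb
    rw [h]
    ext i; simp
  · intro h
    exact absurd (by simp) h

lemma aux_vand {F : Type*} [Field F] {n : ℕ} :
    (Matrix.vandermonde (X : Fin n → MvPolynomial (Fin n) F)).det =
      ∑ σ : Equiv.Perm (Fin n), monomial
        (Finsupp.equivFunOnFinite.symm (fun i => ((σ i : Fin n) : ℕ)))
          (((Equiv.Perm.sign σ : ℤˣ) : ℤ) : F) := by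
  rw [← Matrix.det_transpose, Matrix.det_apply]
  refine Finset.sum_congr rfl fun σ _ => ?_
  rw [monomial_eq, Finsupp.prod_fintype _ _ (by simp)]
  simp [Matrix.vandermonde_apply, Units.smul_def, zsmul_eq_mul]

lemma aux_vand_deg {F : Type*} [Field F] {n : ℕ} :
    (Matrix.vandermonde (X : Fin n → MvPolynomial (Fin n) F)).det.totalDegree ≤
      ∑ i : Fin n, (i : ℕ) := by
  rw [aux_vand]
  refine totalDegree_finsetSum_le fun σ _ => (totalDegree_monomial_le _ _).trans ?_
  rw [Finsupp.sum_fintype _ _ (by simp)]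
  simp [Equiv.sum_comp σ (fun i : Fin n => (i : ℕ))]

lemma aux_coeff_s10 {F : Type*} [Field F] {n : ℕ} (k : ℕ) (hk : n ≤ k) (hk0 : 0 < k)
    (a : Fin n → F) (r t : Fin n →₀ ℕ) (ht : ∀ i, t i = k * r i + i) :
    coeff t ((∑ i : Fin n, C (a i) * (X i : MvPolynomial (Fin n) F) ^ k) ^ (∑ i, r i) *
      (Matrix.vandermonde (X : Fin n → MvPolynomial (Fin n) F)).det) =
      (Nat.multinomial Finset.univ r : F) * ∏ i, a i ^ r i := by
  classical
  have hE : (∑ i : Fin n, C (a i) * (X i : MvPolynomial (Fin n) F) ^ k) ^ (∑ i, r i) =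
      expand k ((∑ i : Fin n, C (a i) * (X i : MvPolynomial (Fin n) F)) ^ (∑ i, r i)) := by
    simp
  rw [hE, aux_vand, Finset.mul_sum, coeff_sum, Finset.sum_eq_single 1]
  · rw [coeff_mul_monomial', if_pos]
    · have : t - Finsupp.equivFunOnFinite.symm
          (fun i => (((1 : Equiv.Perm (Fin n)) i : Fin n) : ℕ)) = k • r := by
        ext i; simp [ht]
      rw [this, coeff_expand_smul k hk0.ne', aux_coeff_lin]
      simp
    · intro i; simp [ht]
  · intro σ _ hσ
    rw [coeff_mul_monomial']
    split_ifs with hle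
    · obtain ⟨i, hi⟩ : ∃ i, σ i ≠ i := by
        by_contra! h
        exact hσ (Equiv.ext h)
      rw [coeff_expand_of_not_dvd (i := i), zero_mul]
      have hl := hle i
      simp only [Finsupp.equivFunOnFinite_symm_apply_apply] at hl
      simp only [Finsupp.coe_tsub, Pi.sub_apply, Finsupp.equivFunOnFinite_symm_apply_apply]
      intro hd
      have h1 : (σ i : ℕ) ≡ t i [MOD k] := (Nat.modEq_iff_dvd' hl).2 hd
      rw [ht i] at h1
      have h2 : (σ i : ℕ) ≡ i [MOD k] := h1.trans (by simp [Nat.ModEq])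
      have h3 := Nat.ModEq.eq_of_lt_of_lt h2 ((σ i).2.trans_le hk) (i.2.trans_le hk)
      exact hi (Fin.ext h3)
    · rfl
  · simp

theorem stmt_10 {F : Type*} [Field F] (n k : ℕ) (hkn : n ≤ k)
    (A : Fin n → Finset F) (hA : ∀ i : Fin n, i.1 + 1 ≤ (A i).card)
    (a : Fin n → F) (ha : ∀ i, a i ≠ 0)
    (g f : MvPolynomial (Fin n) F)
    (hf : f = (∑ i : Fin n, C (a i) * (X i : MvPolynomial (Fin n) F) ^ k) + g)
    (hg : g.totalDegree < k) :
    min (if ringChar F = 0 then (⊤ : ℕ∞) else (ringChar F : ℕ∞))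
        ((1 + ∑ i : Fin n, ((A i).card - (i.1 + 1)) / k : ℕ)) ≤
      ({y : F | ∃ x : Fin n → F, (∀ i, x i ∈ A i) ∧ Function.Injective x ∧
          MvPolynomial.eval x f = y}.ncard : ℕ∞) := by
  classical
  set V := {y : F | ∃ x : Fin n → F, (∀ i, x i ∈ A i) ∧ Function.Injective x ∧
          MvPolynomial.eval x f = y} with hV
  have hfin : V.Finite := by
    refine ((Fintype.piFinset A).image (fun x => eval x f)).finite_toSet.subset ?_
    rintro y ⟨x, hx, _, rfl⟩
    simp only [Finset.coe_image, Set.mem_image, Finset.mem_coe, Fintype.mem_piFinset]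
    exact ⟨x, hx, rfl⟩
  by_contra hcon
  rw [not_le, lt_min_iff] at hcon
  obtain ⟨hc1, hc2⟩ := hcon
  have hk0 : 0 < k := by omega
  rw [Set.ncard_eq_toFinset_card V hfin] at hc1 hc2
  set S := hfin.toFinset with hS
  have hchar : ringChar F = 0 ∨ S.card < ringChar F := by
    by_cases h0 : ringChar F = 0
    · exact Or.inl h0
    · rw [if_neg h0] at hc1
      exact Or.inr (by exact_mod_cast hc1)
  have hc2' : S.card < 1 + ∑ i : Fin n, ((A i).card - (i.1 + 1)) / k := by exact_mod_cast hc2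
  obtain ⟨r', hr', hsum⟩ := aux_split Finset.univ
    (fun i : Fin n => ((A i).card - (i.1 + 1)) / k) S.card (by omega)
  set r : Fin n →₀ ℕ := Finsupp.equivFunOnFinite.symm r' with hr
  have hrr : ∀ i, r i = r' i := fun i => by simp [hr]
  have hrs : ∑ i, r i = S.card := by simp only [hrr, hsum]
  set t : Fin n →₀ ℕ := Finsupp.equivFunOnFinite.symm (fun i => k * r i + i) with htdef
  have ht : ∀ i, t i = k * r i + i := fun i => by simp [htdef]
  set L := ∑ i : Fin n, C (a i) * (X i : MvPolynomial (Fin n) F) ^ k with hLdef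
  have hL : L.totalDegree ≤ k := by
    refine totalDegree_finsetSum_le fun i _ => (totalDegree_mul _ _).trans ?_
    rw [totalDegree_C, totalDegree_X_pow, zero_add]
  obtain ⟨R, hR, hRd⟩ := aux_prod k L g hL hg S
  set D := (Matrix.vandermonde (X : Fin n → MvPolynomial (Fin n) F)).det with hD
  have hDd : D.totalDegree ≤ ∑ i : Fin n, (i : ℕ) := aux_vand_deg
  have htd : t.degree = k * S.card + ∑ i : Fin n, (i : ℕ) := by
    rw [Finsupp.degree_eq_sum]
    simp only [ht, Finset.sum_add_distrib, ← Finset.mul_sum, hrs]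
  have hcoef : coeff t ((∏ c ∈ S, (L + g - C c)) * D) ≠ 0 := by
    have h0 : coeff t (R * D) = 0 := by
      rcases hRd with h | h
      · simp [h]
      · apply coeff_eq_zero_of_totalDegree_lt
        have := totalDegree_mul R D
        change _ < t.degree
        omega
    rw [hR, add_mul, coeff_add, h0, add_zero, ← hrs, aux_coeff_s10 k hkn hk0 a r t ht]
    refine mul_ne_zero ?_ (Finset.prod_ne_zero_iff.2 fun i _ => pow_ne_zero _ (ha i))
    intro hz
    have hm := Nat.multinomial_spec Finset.univ (r : Fin n → ℕ)
    apply aux_fact (F := F) S.card hchar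
    rw [← hrs, ← hm, Nat.cast_mul, hz, mul_zero]
  have hdeg : ((∏ c ∈ S, (L + g - C c)) * D).totalDegree = t.degree := by
    apply le_antisymm
    · refine (totalDegree_mul _ _).trans ?_
      have h1 : (∏ c ∈ S, (L + g - C c)).totalDegree ≤ k * S.card := by
        refine (totalDegree_finsetProd _ _).trans ?_
        rw [mul_comm]
        refine Finset.sum_le_card_nsmul _ _ _ fun c _ => ?_
        exact (totalDegree_sub_C_le _ _).trans
          ((totalDegree_add _ _).trans (max_le hL hg.le))
      omega
    · exact le_totalDegree (mem_support_iff.2 hcoef)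
  obtain ⟨x, hx, hne⟩ := combinatorial_nullstellensatz_exists_eval_nonzero _ t hcoef hdeg A
    (fun i => by
      rw [ht, hrr]
      have h1 := Nat.mul_le_mul_left k (hr' i)
      have h2 := Nat.mul_div_le ((A i).card - (i.1 + 1)) k
      have h3 := hA i
      omega)
  rw [map_mul] at hne
  have hne1 := left_ne_zero_of_mul hne
  have hne2 := right_ne_zero_of_mul hne
  have hinj : Function.Injective x := by
    rw [← Matrix.det_vandermonde_ne_zero_iff]
    rw [hD, Matrix.det_vandermonde] at hne2
    rw [Matrix.det_vandermonde]
    simpa using hne2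
  rw [map_prod, Finset.prod_ne_zero_iff] at hne1
  refine hne1 (eval x f) ?_ ?_
  · rw [hS, Set.Finite.mem_toFinset]
    exact ⟨x, hx, hinj, rfl⟩
  · rw [← hf]; simp
end
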